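/- arXiv:1211.4571 — 6 statements merged into one kernel-verified Lean document; each statement's English description precedes it below -/
import Mathlib

section
/- Let α be a real number with 1 < α < 2, and let x₀ be a positive real number satisfying x₀^(α−1) − (π/(e²√3))·x₀ + 1 = 0. Then for every positive integer n with n > x₀, there exist at least ⌊n^α⌋ primes q satisfying p_{n+1} < q < p₁·p₂⋯p_{n+1}, where p_k denotes the k-th prime (p₁ = 2). -/
/-!
The root equation is only used to force `n ≥ 9`: since `π / (e²√3) < 1/4`, a positive root `x₀`
satisfies `x₀ > 4`, so that `x₀ ^ (α - 1) ≥ 1` and hence `x₀ > 8`. As `α < 2`, it then suffices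
to find `n²` primes strictly between `p_{n+1}` and the primorial.

The primorial is at least `∏ (i + 2) = (n + 2)! > 2 ^ (n + 3)`, and Chebyshev's lower bound
gives `k · π(2 ^ k) ≥ 2 ^ k - k - 1`. With `k = n + 3` this yields at least `n² + n + 1` primes up
to `2 ^ (n + 3)`, of which at most `n + 1` are `≤ p_{n+1}`.
-/

open Real Finset

/-- Chebyshev's lower bound for the prime counting function at powers of two. -/
lemma two_pow_le_mul_primeCounting (k : ℕ) (hk : 0 < k) :
    2 ^ k ≤ k * Nat.primeCounting (2 ^ k) + (k + 1) := by
  have h := Chebyshev.pi_ge (2 ^ k)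
  have hl : 0 < Real.log 2 := Real.log_pos (by norm_num)
  have hk' : (0 : ℝ) < k := by exact_mod_cast hk
  push_cast at h
  rw [Real.log_pow, div_le_iff₀ (by positivity)] at h
  have h2 : Real.log ((2 : ℝ) ^ k + 1) ≤ (k + 1) * Real.log 2 := by
    have : Real.log ((2 : ℝ) ^ (k + 1)) = (k + 1) * Real.log 2 := by
      rw [Real.log_pow]; push_cast; ring
    rw [← this]
    apply Real.log_le_log (by positivity)
    have : (1 : ℝ) ≤ 2 ^ k := one_le_pow₀ (by norm_num)
    rw [pow_succ]; linarith
  have h3 : (2 : ℝ) ^ k * Real.log 2 ≤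
      (k * (Nat.primeCounting (2 ^ k) : ℝ) + (k + 1)) * Real.log 2 := by linarith
  have h4 := le_of_mul_le_mul_right h3 hl
  exact_mod_cast h4

lemma cubic_le_two_pow (n : ℕ) (hn : 9 ≤ n) :
    (n + 3) * (n ^ 2 + n + 1) + (n + 3 + 1) ≤ 2 ^ (n + 3) := by
  induction n, hn using Nat.le_induction with
  | base => norm_num
  | succ m hm ih =>
    rw [show m + 1 + 3 = (m + 3) + 1 by ring, pow_succ 2 (m + 3)]
    nlinarith [mul_le_mul hm hm (by norm_num) (by omega)]

lemma two_pow_lt_prod_nth_prime (n : ℕ) (hn : 9 ≤ n) :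
    2 ^ (n + 3) < ∏ i ∈ Finset.range (n + 1), Nat.nth Nat.Prime i := by
  have h1 : ∏ i ∈ Finset.range (n + 1), (i + 2) ≤
      ∏ i ∈ Finset.range (n + 1), Nat.nth Nat.Prime i :=
    Finset.prod_le_prod' fun i _ => Nat.add_two_le_nth_prime i
  refine lt_of_lt_of_le ?_ h1
  clear h1
  induction n, hn using Nat.le_induction with
  | base => decide
  | succ m hm ih =>
    rw [Finset.prod_range_succ, show m + 1 + 3 = (m + 3) + 1 by ring, pow_succ]
    exact Nat.mul_lt_mul_of_lt_of_le ih (by omega) (by omega)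

/-- At least `π(N) - (n + 1)` primes lie strictly between the prime of index `n` (counted from
`0`) and any `P > N`. -/
lemma primeCounting_le_card_add (n N P : ℕ) (h : N < P) :
    Nat.primeCounting N ≤
      ((Finset.Ioo (Nat.nth Nat.Prime n) P).filter Nat.Prime).card + (n + 1) := by
  have hc : (Nat.primesLE (Nat.nth Nat.Prime n)).card = n + 1 := by
    rw [Nat.primesLE_card_eq_primeCounting, Nat.primeCounting, Nat.primeCounting',
      Nat.count_nth_succ_of_infinite Nat.infinite_setOfPred_prime]
  rw [← hc, ← Nat.primesLE_card_eq_primeCounting]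
  refine le_trans (Finset.card_le_card ?_) (Finset.card_union_le _ _)
  intro q hq
  simp only [Nat.mem_primesLE, Finset.mem_union, Finset.mem_filter, Finset.mem_Ioo] at hq ⊢
  rcases le_or_gt q (Nat.nth Nat.Prime n) with h' | h'
  · exact Or.inr ⟨h', hq.2⟩
  · exact Or.inl ⟨⟨h', by omega⟩, hq.2⟩

lemma pi_div_lt_quarter : π / (Real.exp 2 * Real.sqrt 3) < 1 / 4 := by
  have h1 : (1.73 : ℝ) < Real.sqrt 3 := Real.lt_sqrt_of_sq_lt (by norm_num)
  have h2 : (7.38 : ℝ) < Real.exp 2 := by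
    have := Real.exp_one_gt_d9
    have h : Real.exp 2 = Real.exp 1 * Real.exp 1 := by rw [← Real.exp_add]; norm_num
    rw [h]; nlinarith
  have h3 := Real.pi_lt_d2
  rw [div_lt_iff₀ (by positivity)]
  nlinarith

/-- Let `α` be a real number with `1 < α < 2`, and let `x₀` be a positive real number
satisfying `x₀^(α−1) − (π/(e²√3))·x₀ + 1 = 0`. Then for every positive integer `n` with
`n > x₀`, there exist at least `⌊n^α⌋` primes `q` with `p_{n+1} < q < p₁·p₂⋯p_{n+1}`,
where `p_k` is the `k`-th prime (so `p_{k+1} = Nat.nth Nat.Prime k`). -/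
theorem stmt_0 (α : ℝ) (hα1 : 1 < α) (hα2 : α < 2)
    (x₀ : ℝ) (hx₀ : 0 < x₀)
    (hroot : x₀ ^ (α - 1) - (π / (Real.exp 2 * Real.sqrt 3)) * x₀ + 1 = 0)
    (n : ℕ) (hn : 0 < n) (hnx : x₀ < (n : ℝ)) :
    ⌊(n : ℝ) ^ α⌋₊ ≤
      ((Finset.Ioo (Nat.nth Nat.Prime n)
          (∏ i ∈ Finset.range (n + 1), Nat.nth Nat.Prime i)).filter Nat.Prime).card := by
  have hc := mul_lt_mul_of_pos_right pi_div_lt_quarter hx₀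
  have hp : 0 < x₀ ^ (α - 1) := Real.rpow_pos_of_pos hx₀ _
  have h1 : 1 ≤ x₀ ^ (α - 1) := Real.one_le_rpow (by linarith) (by linarith)
  have hn9 : 9 ≤ n := by
    have : (8 : ℝ) < n := by linarith
    exact_mod_cast this
  have hfloor : ⌊(n : ℝ) ^ α⌋₊ ≤ n ^ 2 := by
    apply Nat.floor_le_of_le
    have hn1 : (1 : ℝ) ≤ n := by exact_mod_cast hn
    have := Real.rpow_le_rpow_of_exponent_le hn1 hα2.le
    rw [Real.rpow_two] at this
    exact_mod_cast this
  have hpi : n ^ 2 + n + 1 ≤ Nat.primeCounting (2 ^ (n + 3)) := by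
    have ha := cubic_le_two_pow n hn9
    have hb := two_pow_le_mul_primeCounting (n + 3) (by omega)
    exact Nat.le_of_mul_le_mul_left (by omega : (n + 3) * (n ^ 2 + n + 1) ≤
      (n + 3) * Nat.primeCounting (2 ^ (n + 3))) (by omega)
  have := primeCounting_le_card_add n _ _ (two_pow_lt_prod_nth_prime n hn9)
  omega
end

section
/- For each positive integer n there are at least n primes q satisfying p_{n+1} < q < p₁·p₂⋯p_{n+1}, where p_k denotes the k-th prime (p₁ = 2). -/
/-!
By Bertrand's postulate consecutive primes satisfy `p_{k+1} < 2 p_k` (the bound `2 p_k` is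
composite, so it is not attained). Iterating, `p_{n+1+j} < 2 ^ j * p_{n+1}` for `j ≥ 1`. Since each
of `p₁, …, p_n` is at least `2`, for `j ≤ n` this is at most `p₁ ⋯ p_n * p_{n+1}`. Hence the `n`
primes `p_{n+2}, …, p_{2n+1}` all lie in the required interval.
-/

open Finset

theorem nth_prime_succ_lt_two_mul (k : ℕ) :
    Nat.nth Nat.Prime (k + 1) < 2 * Nat.nth Nat.Prime k := by
  have hk := Nat.prime_nth_prime k
  obtain ⟨q, hq, hlt, hle⟩ := Nat.exists_prime_lt_and_le_two_mul _ hk.ne_zero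
  have hne : q ≠ 2 * Nat.nth Nat.Prime k := by
    rintro rfl
    exact Nat.not_prime_mul (by norm_num) hk.one_lt.ne' hq
  have hsucc : Nat.nth Nat.Prime (k + 1) ≤ q := by
    by_contra! h
    exact absurd (Nat.le_nth_of_lt_nth_succ h hq) (by omega)
  omega

theorem nth_prime_add_lt (n j : ℕ) :
    Nat.nth Nat.Prime (n + (j + 1)) < 2 ^ (j + 1) * Nat.nth Nat.Prime n := by
  induction j with
  | zero => simpa using nth_prime_succ_lt_two_mul n
  | succ j ih =>
    have h := nth_prime_succ_lt_two_mul (n + (j + 1))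
    rw [pow_succ, ← add_assoc n]
    linarith

/-- For each positive integer `n` there are at least `n` primes `q` with
`p_{n+1} < q < p₁·p₂⋯p_{n+1}`, where `p_k` is the `k`-th prime
(so `p_{k+1} = Nat.nth Nat.Prime k`). -/
theorem stmt_1 (n : ℕ) (hn : 0 < n) :
    n ≤ ((Finset.Ioo (Nat.nth Nat.Prime n)
          (∏ i ∈ Finset.range (n + 1), Nat.nth Nat.Prime i)).filter Nat.Prime).card := by
  have hmono := Nat.nth_strictMono Nat.infinite_setOfPred_prime
  have hprod : 2 ^ n ≤ ∏ i ∈ Finset.range n, Nat.nth Nat.Prime i := by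
    simpa using Finset.pow_card_le_prod (s := Finset.range n) (f := Nat.nth Nat.Prime) (n := 2)
      (fun i _ => (Nat.prime_nth_prime i).two_le)
  have hinj : Function.Injective fun j => Nat.nth Nat.Prime (n + (j + 1)) := by
    intro a b h
    have := hmono.injective h
    omega
  calc n = ((Finset.range n).image fun j => Nat.nth Nat.Prime (n + (j + 1))).card := by
        rw [Finset.card_image_of_injective _ hinj, Finset.card_range]
    _ ≤ _ := by
        refine Finset.card_le_card fun q hq => ?_
        obtain ⟨j, hj, rfl⟩ := Finset.mem_image.mp hq
        rw [Finset.mem_range] at hj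
        rw [Finset.mem_filter, Finset.mem_Ioo]
        refine ⟨⟨hmono (by omega), ?_⟩, Nat.prime_nth_prime _⟩
        rw [Finset.prod_range_succ]
        refine (nth_prime_add_lt n j).trans_le (Nat.mul_le_mul_right _ (le_trans ?_ hprod))
        exact Nat.pow_le_pow_right (by norm_num) hj
end

section
/- For every real number α with 1 < α < 2 there exists a positive integer N such that for all integers n > N, there are at least ⌊n^α⌋ primes q satisfying p_{n+1} < q < p₁·p₂⋯p_{n+1}, where p_k denotes the k-th prime (p₁ = 2). -/
open Finset

/-!
The product of the first `n + 1` primes is at least `2 ^ (n + 1)`, so Chebyshev's lower bound for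
`π` (`Chebyshev.pi_ge`) provides at least `(2 ^ (n + 1) - (n + 2)) / (n + 1)` primes below it.
Only `n + 1` of these are at most `p_{n+1}`, and the exponential growth leaves at least `n ^ 2`,
hence at least `n ^ α`, primes strictly in between once `n ≥ 12`.
-/

theorem two_pow_le_prod_primes (m : ℕ) :
    2 ^ m ≤ ∏ i ∈ Finset.range m, Nat.nth Nat.Prime i := by
  have h := Finset.prod_le_prod' (s := Finset.range m) (f := fun _ => 2)
    (g := fun i => Nat.nth Nat.Prime i) (fun i _ => (Nat.prime_nth_prime i).two_le)
  simpa using h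

theorem poly_le_two_pow (n : ℕ) (hn : 12 ≤ n) :
    (n + 1) * (n ^ 2 + n + 1) + n + 2 ≤ 2 ^ (n + 1) := by
  induction n, hn using Nat.le_induction with
  | base => norm_num
  | succ k hk ih =>
    rw [pow_succ 2 (k + 1)]
    nlinarith [Nat.mul_le_mul_right (k ^ 2) hk, Nat.mul_le_mul_right k hk]

/-- The count is over primes strictly below `2 ^ (n + 1)`, a power of two that is itself composite;
this is where Chebyshev's lower bound enters. -/
theorem le_count_prime_two_pow (n : ℕ) (hn : 12 ≤ n) :
    n ^ 2 + n + 1 ≤ Nat.count Nat.Prime (2 ^ (n + 1)) := by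
  have hpi : Nat.primeCounting (2 ^ (n + 1)) = Nat.count Nat.Prime (2 ^ (n + 1)) := by
    have hnp : ¬ Nat.Prime (2 ^ (n + 1)) := Nat.Prime.not_prime_pow (by omega)
    simp [Nat.primeCounting, Nat.primeCounting', Nat.count_succ, hnp]
  rw [← hpi]
  have h := Chebyshev.pi_ge (2 ^ (n + 1))
  have hl2 : 0 < Real.log 2 := Real.log_pos (by norm_num)
  have hlog : Real.log ((2 : ℝ) ^ (n + 1) + 1) ≤ (n + 2) * Real.log 2 := by
    have h1 : Real.log ((2 : ℝ) ^ (n + 1) + 1) ≤ Real.log ((2 : ℝ) ^ (n + 2)) := by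
      apply Real.log_le_log (by positivity)
      have : (1 : ℝ) ≤ 2 ^ (n + 1) := one_le_pow₀ (by norm_num)
      rw [pow_succ _ (n + 1)]
      linarith
    rw [Real.log_pow] at h1
    push_cast at h1
    exact h1
  have hp : (((n + 1) * (n ^ 2 + n + 1) + n + 2 : ℕ) : ℝ) ≤ ((2 ^ (n + 1) : ℕ) : ℝ) := by
    exact_mod_cast poly_le_two_pow n hn
  push_cast at h hp
  rw [Real.log_pow] at h
  push_cast at h
  have key : ((n : ℝ) ^ 2 + n + 1) ≤ (Nat.primeCounting (2 ^ (n + 1)) : ℝ) := by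
    refine le_trans ?_ h
    rw [le_div_iff₀ (by positivity)]
    nlinarith [mul_le_mul_of_nonneg_right hp hl2.le]
  exact_mod_cast key

/-- Primes below `P` are those at most `p_{n+1}`, of which there are `n + 1`, together with those
strictly between `p_{n+1}` and `P`. -/
theorem count_prime_le_card_Ioo (n P : ℕ) :
    Nat.count Nat.Prime P ≤
      (n + 1) + ((Finset.Ioo (Nat.nth Nat.Prime n) P).filter Nat.Prime).card := by
  have hc : Nat.count Nat.Prime (Nat.nth Nat.Prime n + 1) = n + 1 :=
    Nat.count_nth_succ_of_infinite Nat.infinite_setOfPred_prime n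
  rw [Nat.count_eq_card_filter_range] at hc ⊢
  rw [← hc]
  refine le_trans (Finset.card_le_card ?_) (Finset.card_union_le _ _)
  intro q hq
  simp only [Finset.mem_union, Finset.mem_filter, Finset.mem_range, Finset.mem_Ioo] at hq ⊢
  rcases Nat.lt_or_ge (Nat.nth Nat.Prime n) q with h | h
  · exact Or.inr ⟨⟨h, hq.1⟩, hq.2⟩
  · exact Or.inl ⟨by omega, hq.2⟩

/-- For every real `α` with `1 < α < 2` there is a positive integer `N` such that for all
integers `n > N` there are at least `⌊n^α⌋` primes `q` with `p_{n+1} < q < p₁·p₂⋯p_{n+1}`,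
where `p_k` is the `k`-th prime (so `p_{k+1} = Nat.nth Nat.Prime k`). -/
theorem stmt_2 (α : ℝ) (hα1 : 1 < α) (hα2 : α < 2) :
    ∃ N : ℕ, 0 < N ∧ ∀ n : ℕ, N < n →
      ⌊(n : ℝ) ^ α⌋₊ ≤
        ((Finset.Ioo (Nat.nth Nat.Prime n)
            (∏ i ∈ Finset.range (n + 1), Nat.nth Nat.Prime i)).filter Nat.Prime).card := by
  refine ⟨12, by norm_num, fun n hn => ?_⟩
  have hfloor : ⌊(n : ℝ) ^ α⌋₊ ≤ n ^ 2 := by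
    apply Nat.floor_le_of_le
    have h1 : (1 : ℝ) ≤ n := by exact_mod_cast (by omega : 1 ≤ n)
    have h2 := Real.rpow_le_rpow_of_exponent_le h1 hα2.le
    rw [Real.rpow_two] at h2
    exact_mod_cast h2
  have h1 := le_count_prime_two_pow n hn.le
  have h2 := Nat.count_monotone Nat.Prime (two_pow_le_prod_primes (n + 1))
  have h3 := count_prime_le_card_Ioo n (∏ i ∈ Finset.range (n + 1), Nat.nth Nat.Prime i)
  omega
end

section
/- Let α be a real number with α > 1. Then for every positive integer n, (1/n!)·C(⌊n^α⌋ + n, n) < e^{2n}·(n^{α−1} + 1)^n·√3 / (2·π·n^{n+1}). -/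
open Real

/-!
Write `N = ⌊n^α⌋`. Then `C(N + n, n) ≤ (N + n)^n / n! ≤ (n^α + n)^n / n!`, and
`n^α + n = n (n^(α-1) + 1)`. Stirling's lower bound `n! ≥ √(2πn) (n/e)^n`, squared, bounds
`1 / n!^2` by `e^(2n) / (2π n^(2n+1))`. This gives the claim even without the factor `√3 > 1`,
which accounts for the strict inequality.
-/

/-- Let `α > 1` be real. Then for every positive integer `n`,
`(1/n!)·C(⌊n^α⌋ + n, n) < e^{2n}·(n^{α−1} + 1)^n·√3 / (2·π·n^{n+1})`. -/
theorem stmt_4 (α : ℝ) (hα : 1 < α) (n : ℕ) (hn : 0 < n) :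
    (1 / (n.factorial : ℝ)) * ((⌊(n : ℝ) ^ α⌋₊ + n).choose n : ℝ) <
      Real.exp (2 * n) * ((n : ℝ) ^ (α - 1) + 1) ^ n * Real.sqrt 3 /
        (2 * π * (n : ℝ) ^ (n + 1)) := by
  have hn' : (0 : ℝ) < n := by exact_mod_cast hn
  have hx : (0 : ℝ) < (n : ℝ) ^ (α - 1) + 1 := by positivity
  have hf : (0 : ℝ) < n.factorial := by exact_mod_cast n.factorial_pos
  have hN : ((⌊(n : ℝ) ^ α⌋₊ + n : ℕ) : ℝ) ≤ n * ((n : ℝ) ^ (α - 1) + 1) := by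
    have h1 : ((⌊(n : ℝ) ^ α⌋₊ : ℕ) : ℝ) ≤ (n : ℝ) ^ α := Nat.floor_le (by positivity)
    have h2 : (n : ℝ) ^ α = n * (n : ℝ) ^ (α - 1) := by
      rw [Real.rpow_sub_one hn'.ne']
      field_simp
    push_cast
    linarith
  have hC : ((⌊(n : ℝ) ^ α⌋₊ + n).choose n : ℝ) ≤
      (n * ((n : ℝ) ^ (α - 1) + 1)) ^ n / n.factorial := by
    refine (Nat.choose_le_pow_div n _).trans ?_
    gcongr
  have hS : 2 * π * n * ((n : ℝ) ^ n) ^ 2 / Real.exp (2 * n) ≤ (n.factorial : ℝ) ^ 2 := by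
    have h := pow_le_pow_left₀ (by positivity) (Stirling.le_factorial_stirling n) 2
    have he : Real.exp (2 * n) = (Real.exp 1 ^ n) ^ 2 := by
      rw [← pow_mul, ← Real.exp_nat_mul]
      push_cast
      ring_nf
    rw [mul_pow, Real.sq_sqrt (by positivity), div_pow, div_pow, ← he, ← mul_div_assoc] at h
    exact h
  have h3 : (1 : ℝ) < √3 := by
    rw [Real.lt_sqrt] <;> norm_num
  calc (1 / (n.factorial : ℝ)) * ((⌊(n : ℝ) ^ α⌋₊ + n).choose n : ℝ)
      ≤ (1 / (n.factorial : ℝ)) * ((n * ((n : ℝ) ^ (α - 1) + 1)) ^ n / n.factorial) := by gcongr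
    _ = (n * ((n : ℝ) ^ (α - 1) + 1)) ^ n / (n.factorial : ℝ) ^ 2 := by field_simp
    _ ≤ (n * ((n : ℝ) ^ (α - 1) + 1)) ^ n /
        (2 * π * n * ((n : ℝ) ^ n) ^ 2 / Real.exp (2 * n)) := by gcongr
    _ = Real.exp (2 * n) * ((n : ℝ) ^ (α - 1) + 1) ^ n * 1 / (2 * π * (n : ℝ) ^ (n + 1)) := by
      rw [mul_pow]
      field_simp
      ring
    _ < _ := by gcongr
end

section
/- For every integer n ≥ 3, the product (p₁ − 1)(p₂ − 1)⋯(p_{n+1} − 1) is at least 2^{n−2}·(n+1)!, where p_k denotes the k-th prime (p₁ = 2). -/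
open Finset

/-!
Induction on `n`. For `n = 3` both sides equal `48`. Passing from `n` to `n + 1` multiplies the
left side by `2 (n + 2)` and the right side by `p_{n+2} - 1`, so it suffices that
`p_{n+2} ≥ 2 (n + 2) + 1`. This is `two_mul_add_three_le_nth_prime`: it holds with equality at the
fifth prime `11`, and consecutive odd primes differ by at least `2`.
-/

theorem two_mul_add_three_le_nth_prime (k : ℕ) (hk : 4 ≤ k) :
    2 * k + 3 ≤ Nat.nth Nat.Prime k := by
  induction k, hk using Nat.le_induction with
  | base => rw [Nat.nth_prime_four_eq_eleven]
  | succ k hk ih =>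
    have hlt : Nat.nth Nat.Prime k < Nat.nth Nat.Prime (k + 1) :=
      Nat.nth_strictMono Nat.infinite_setOfPred_prime k.lt_succ_self
    have h1 := (Nat.prime_nth_prime k).eq_two_or_odd
    have h2 := (Nat.prime_nth_prime (k + 1)).eq_two_or_odd
    omega

/-- For every integer `n ≥ 3`, `(p₁ − 1)(p₂ − 1)⋯(p_{n+1} − 1) ≥ 2^{n−2}·(n+1)!`, where
`p_k` is the `k`-th prime (so `p_{k+1} = Nat.nth Nat.Prime k`). -/
theorem stmt_9 (n : ℕ) (hn : 3 ≤ n) :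
    2 ^ (n - 2) * (n + 1).factorial ≤
      ∏ i ∈ Finset.range (n + 1), (Nat.nth Nat.Prime i - 1) := by
  induction n, hn using Nat.le_induction with
  | base =>
    simp [Finset.prod_range_succ, Nat.nth_prime_zero_eq_two, Nat.nth_prime_one_eq_three,
      Nat.nth_prime_two_eq_five, Nat.nth_prime_three_eq_seven, Nat.factorial]
  | succ n hn ih =>
    have hp := two_mul_add_three_le_nth_prime (n + 1) (by omega)
    have hfac : 2 * (n + 2) ≤ Nat.nth Nat.Prime (n + 1) - 1 := by omega
    have he : n + 1 - 2 = (n - 2) + 1 := by omega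
    rw [Finset.prod_range_succ, he, Nat.factorial_succ (n + 1), pow_succ]
    calc 2 ^ (n - 2) * 2 * ((n + 1 + 1) * (n + 1).factorial)
        = (2 ^ (n - 2) * (n + 1).factorial) * (2 * (n + 2)) := by ring
      _ ≤ _ := Nat.mul_le_mul ih hfac
end

section
/- Let m be a positive integer, let P = p₁·p₂⋯p_{m+1} be the product of the first m+1 primes, and suppose that there are exactly k primes q with p_{m+1} < q < P. Then C(m+k, m) ≥ φ(P) = (p₁ − 1)(p₂ − 1)⋯(p_{m+1} − 1), where p_j denotes the j-th prime (p₁ = 2). -/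
open Finset

/-!
`φ(P)` counts the integers `0 ≤ n < P` coprime to `P`. Every prime factor of such an `n` avoids the
first `m + 1` primes, so it is one of the `k` primes in `(p_{m+1}, P)`. Since
`n < P ≤ p_{m+1} ^ (m + 1)`, there are at most `m` of these factors counted with multiplicity.
Padding with ones, `n` is the product of a multiset of size exactly `m` with elements among `1` and
these `k` primes (`exists_sym_prod_eq`). There are `C(m + k, m)` such multisets, so at most that
many `n`.
-/

lemma dvd_prod_nth_prime {m q : ℕ} (hq : q.Prime) (hle : q ≤ Nat.nth Nat.Prime m) :
    q ∣ ∏ i ∈ Finset.range (m + 1), Nat.nth Nat.Prime i := by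
  have hc : Nat.count Nat.Prime q ≤ m := by
    rw [← Nat.nth_count hq] at hle
    exact (Nat.nth_le_nth Nat.infinite_setOfPred_prime).1 hle
  have h := Finset.dvd_prod_of_mem (Nat.nth Nat.Prime)
    (Finset.mem_range.2 (Nat.lt_succ_of_le hc))
  rwa [Nat.nth_count hq] at h

lemma totient_prod_nth_prime (n : ℕ) :
    Nat.totient (∏ i ∈ Finset.range n, Nat.nth Nat.Prime i) =
      ∏ i ∈ Finset.range n, (Nat.nth Nat.Prime i - 1) := by
  induction n with
  | zero => simp
  | succ n ih =>
    have hcop : Nat.Coprime (∏ i ∈ Finset.range n, Nat.nth Nat.Prime i)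
        (Nat.nth Nat.Prime n) := by
      refine Nat.Coprime.prod_left fun i hi => ?_
      refine (Nat.coprime_primes (Nat.prime_nth_prime i) (Nat.prime_nth_prime n)).2 ?_
      exact (Nat.nth_strictMono Nat.infinite_setOfPred_prime (Finset.mem_range.1 hi)).ne
    rw [Finset.prod_range_succ, Finset.prod_range_succ, Nat.totient_mul hcop, ih,
      Nat.totient_prime (Nat.prime_nth_prime n)]

/-- If all prime factors of `n` lie in `T ∋ 1` and exceed `p`, and `n < p ^ (m + 1)`, then `n` is
the product of a multiset of exactly `m` elements of `T`: its prime factors, padded with ones. -/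
lemma exists_sym_prod_eq {T : Finset ℕ} (hT : 1 ∈ T) {n p m : ℕ} (hn : n ≠ 0) (hp : 1 < p)
    (hfac : ∀ q, q.Prime → q ∣ n → p < q ∧ q ∈ T) (hlt : n < p ^ (m + 1)) :
    ∃ s : Sym T m, ((s : Multiset T).map Subtype.val).prod = n := by
  have hlen : n.primeFactorsList.length ≤ m := by
    have h1 : p ^ n.primeFactorsList.length ≤ n := by
      conv_rhs => rw [← Nat.prod_primeFactorsList hn]
      exact List.pow_card_le_prod _ _ fun q hq =>
        (hfac q (Nat.prime_of_mem_primeFactorsList hq) (Nat.dvd_of_mem_primeFactorsList hq)).1.le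
    have h2 := (Nat.pow_lt_pow_iff_right hp).1 (h1.trans_lt hlt)
    omega
  obtain ⟨t, ht⟩ : ∃ t : Multiset T, t.map Subtype.val =
      (n.primeFactorsList : Multiset ℕ) + Multiset.replicate (m - n.primeFactorsList.length) 1 := by
    refine CanLift.prf (β := Multiset T) _ fun q hq => ?_
    rcases Multiset.mem_add.1 hq with h | h
    · have h := Multiset.mem_coe.1 h
      exact (hfac q (Nat.prime_of_mem_primeFactorsList h) (Nat.dvd_of_mem_primeFactorsList h)).2
    · rwa [Multiset.eq_of_mem_replicate h]
  have hcard : t.card = m := by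
    have := congrArg Multiset.card ht
    simp only [Multiset.card_map, Multiset.card_add, Multiset.coe_card,
      Multiset.card_replicate] at this
    omega
  refine ⟨⟨t, hcard⟩, ?_⟩
  change (t.map Subtype.val).prod = n
  rw [ht]
  simp [Nat.prod_primeFactorsList hn]

/-- Let `m` be a positive integer, let `P = p₁·p₂⋯p_{m+1}` be the product of the first
`m+1` primes, and suppose there are exactly `k` primes `q` with `p_{m+1} < q < P`. Then
`C(m+k, m) ≥ φ(P)` and `φ(P) = (p₁ − 1)(p₂ − 1)⋯(p_{m+1} − 1)`.
Here `p_{j+1} = Nat.nth Nat.Prime j`. -/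
theorem stmt_12 (m : ℕ) (hm : 0 < m)
    (P : ℕ) (hP : P = ∏ i ∈ Finset.range (m + 1), Nat.nth Nat.Prime i)
    (k : ℕ)
    (hk : k = ((Finset.Ioo (Nat.nth Nat.Prime m) P).filter Nat.Prime).card) :
    Nat.totient P ≤ (m + k).choose m ∧
      Nat.totient P = ∏ i ∈ Finset.range (m + 1), (Nat.nth Nat.Prime i - 1) := by
  refine ⟨?_, hP ▸ totient_prod_nth_prime (m + 1)⟩
  set S := (Finset.Ioo (Nat.nth Nat.Prime m) P).filter Nat.Prime with hS
  have h1S : 1 ∉ S := fun h => Nat.not_prime_one (Finset.mem_filter.1 h).2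
  have hPle : P ≤ Nat.nth Nat.Prime m ^ (m + 1) := by
    rw [hP]
    refine (Finset.prod_le_pow_card _ _ (Nat.nth Nat.Prime m) fun i hi => ?_).trans_eq (by simp)
    exact Nat.nth_monotone Nat.infinite_setOfPred_prime (Nat.lt_succ_iff.1 (Finset.mem_range.1 hi))
  have hP1 : P ≠ 1 := fun h => by
    have h2 : 2 ∣ P := hP ▸ dvd_prod_nth_prime Nat.prime_two (Nat.prime_nth_prime m).two_le
    omega
  have hsub : (Finset.range P).filter (fun a => P.Coprime a) ⊆
      (Finset.univ : Finset (Sym (insert 1 S : Finset ℕ) m)).image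
        (fun s : Sym (insert 1 S : Finset ℕ) m =>
          ((s : Multiset (insert 1 S : Finset ℕ)).map Subtype.val).prod) := by
    intro n hn
    obtain ⟨hnP, hcop⟩ := Finset.mem_filter.1 hn
    have hnP := Finset.mem_range.1 hnP
    have hn0 : n ≠ 0 := fun h => hP1 (by simpa [h] using hcop)
    have hfac : ∀ q, q.Prime → q ∣ n → Nat.nth Nat.Prime m < q ∧ q ∈ insert 1 S := by
      intro q hq hqn
      have hlt : Nat.nth Nat.Prime m < q := by
        by_contra! hle
        have hqP : q ∣ P := hP ▸ dvd_prod_nth_prime hq hle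
        exact Nat.not_coprime_of_dvd_of_dvd hq.one_lt hqP hqn hcop
      refine ⟨hlt, Finset.mem_insert_of_mem (Finset.mem_filter.2 ⟨Finset.mem_Ioo.2 ⟨hlt, ?_⟩, hq⟩)⟩
      exact (Nat.le_of_dvd (Nat.pos_of_ne_zero hn0) hqn).trans_lt hnP
    obtain ⟨s, hs⟩ := exists_sym_prod_eq (Finset.mem_insert_self 1 S) hn0
      (Nat.prime_nth_prime m).one_lt hfac (hnP.trans_le hPle)
    exact Finset.mem_image.2 ⟨s, Finset.mem_univ s, hs⟩
  calc Nat.totient P = ((Finset.range P).filter (fun a => P.Coprime a)).card :=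
        Nat.totient_eq_card_coprime P
    _ ≤ Fintype.card (Sym (insert 1 S : Finset ℕ) m) :=
        (Finset.card_le_card hsub).trans Finset.card_image_le
    _ = (m + k).choose m := by
        rw [Sym.card_sym_eq_multichoose, Nat.multichoose_eq, Fintype.card_coe,
          Finset.card_insert_of_notMem h1S, ← hk]
        congr 1
        omega
end
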